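/- Let m ≥ 0 and r ≥ 2 be integers and λ_1,…,λ_r, α_1,…,α_r ∈ [0,1). For every compact subset K of U_r(m), the family of functions (s_1,…,s_r) ↦ (s_1)_k · e(λ_1 n_1) e(λ_2 n_2) ⋯ e(λ_r n_r) / ((n_1+α_1)^{s_1+k+1} (n_2+α_2)^{s_2} ⋯ (n_r+α_r)^{s_r}), indexed by integer tuples n_1 > ⋯ > n_r > 0 and integers k ≥ m−1, converges normally on K. -/

import Mathlib

/-!
On a compact `K ⊆ U_r(m)` two constants are available: a natural number `B` with `|s_1| ≤ B + 1`, and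
some `δ > 0` with `Re(s_1 + ⋯ + s_i) + m ≥ i (1 + δ)` for all `i`. Write `N_i = n_i + α_i`; then
`N_1 ≥ ⋯ ≥ N_r ≥ 1`, and `N_1 ≥ 2` because there are at least two indices.

The binomial coefficient `C(k + 1 + B, B)` bounds `|(s_1)_k|` (`norm_pochZ_le`), and
`N_1^{-(k+1)} ≤ N_1^{-m} 2^{m-(k+1)}` since `k + 1 ≥ m`. What remains is `∏ N_i^{-t_i}` with
`t_1 = Re s_1 + m` and `t_i = Re s_i` for `i ≥ 2`. The partial sums of `t_i - (1 + δ)` are nonnegative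
and `log N_i` is nonnegative and decreasing, so summation by parts
(`sum_mul_nonneg_of_partial_sums`) gives `∏ N_i^{-t_i} ≤ ∏ N_i^{-(1+δ)} ≤ ∏ n_i^{-(1+δ)}`. The
resulting majorant, a function of `n` times a function of `k`, is summable and independent of `s`.
-/

open Complex

/-- `e(a) = e^{2πia}`. -/
noncomputable def eR (a : ℝ) : ℂ := Complex.exp (2 * Real.pi * Complex.I * a)

/-- For a real `b > 0` and `z ∈ ℂ`, `b^z := exp (z log b)` (real logarithm). -/
noncomputable def rpowC (b : ℝ) (z : ℂ) : ℂ := Complex.exp (z * Real.log b)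

/-- Strictly decreasing tuples of positive integers `n_1 > n_2 > ⋯ > n_r > 0`. -/
def DTuple (r : ℕ) : Type := {n : Fin r → ℕ // StrictAnti n ∧ ∀ i, 0 < n i}

/-- The term `e(λ_1 n_1)⋯e(λ_r n_r) / ((n_1+α_1)^{s_1}⋯(n_r+α_r)^{s_r})`. -/
noncomputable def lerchTerm {r : ℕ} (lam al : Fin r → ℝ) (s : Fin r → ℂ)
    (n : Fin r → ℕ) : ℂ :=
  (∏ i, eR (lam i * n i)) / ∏ i, rpowC ((n i : ℝ) + al i) (s i)

/-- The multiple Lerch zeta function (as a sum over strictly decreasing tuples). -/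
noncomputable def multipleLerch {r : ℕ} (lam al : Fin r → ℝ) (s : Fin r → ℂ) : ℂ :=
  ∑' n : DTuple r, lerchTerm lam al s n.1

/-- The term `(n_1+α_1)^{-s_1}⋯(n_r+α_r)^{-s_r}`. -/
noncomputable def hzTerm {r : ℕ} (al : Fin r → ℝ) (s : Fin r → ℂ) (n : Fin r → ℕ) : ℂ :=
  ∏ i, rpowC ((n i : ℝ) + al i) (-(s i))

/-- The multiple Hurwitz zeta function (as a sum over strictly decreasing tuples). -/
noncomputable def multipleHurwitz {r : ℕ} (al : Fin r → ℝ) (s : Fin r → ℂ) : ℂ :=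
  ∑' n : DTuple r, hzTerm al s n.1

/-- `U_r(m) = {s ∈ ℂ^r : Re(s_1+⋯+s_i) > i − m for 1 ≤ i ≤ r}` (0-based indexing). -/
def Ur (r : ℕ) (m : ℤ) : Set (Fin r → ℂ) :=
  {s | ∀ i : Fin r, ((i : ℕ) + 1 - m : ℝ) < (∑ j ∈ Finset.Iic i, s j).re}

/-- `(s)_k = s(s+1)⋯(s+k)/(k+1)!` for `k ≥ 0` and `(s)_k = 1` for `k < 0`. -/
noncomputable def pochZ (s : ℂ) (k : ℤ) : ℂ :=
  if 0 ≤ k then (∏ j ∈ Finset.range (k.toNat + 1), (s + j)) / (Nat.factorial (k.toNat + 1))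
  else 1

/-- The hyperplane `H_{i,k} : s_1 + ⋯ + s_i = i − k` (0-based: `i` here is paper's `i−1`). -/
def Hplane (r : ℕ) (i : Fin r) (k : ℕ) : Set (Fin r → ℂ) :=
  {s | ∑ j ∈ Finset.Iic i, s j = ((i : ℕ) + 1 : ℂ) - k}

/-- The union of the hyperplanes `H_{i,k}` for `(i,k)` satisfying the predicate `P`. -/
def polarSet {r : ℕ} (P : Fin r → ℕ → Prop) : Set (Fin r → ℂ) :=
  {s | ∃ i k, P i k ∧ s ∈ Hplane r i k}

/-- `F` has (at most) simple poles along the hyperplanes `H_{i,k}`, `(i,k) ∈ P`: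
around every point `p`, multiplying `F` by the (finitely many) linear factors
`s_1+⋯+s_i−i+k` of the members of `P` passing through `p` yields a function
that extends analytically to a neighbourhood of `p`. -/
def SimplePolesAlong {r : ℕ} (P : Fin r → ℕ → Prop) (F : (Fin r → ℂ) → ℂ) : Prop :=
  ∀ p : Fin r → ℂ, ∀ T : Finset (Fin r × ℕ),
    (∀ i k, (i, k) ∈ T ↔ (P i k ∧ p ∈ Hplane r i k)) →
    ∃ (V : Set (Fin r → ℂ)) (G : (Fin r → ℂ) → ℂ),
      IsOpen V ∧ p ∈ V ∧ AnalyticOnNhd ℂ G V ∧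
      ∀ s ∈ V, s ∉ polarSet P →
        G s = (∏ q ∈ T, ((∑ j ∈ Finset.Iic q.1, s j) - ((q.1 : ℕ) + 1 : ℂ) + (q.2 : ℂ))) * F s

/-- Abel summation: pairing an antitone sequence with one whose partial sums are nonnegative is
bounded below by the last term of the former times the total of the latter. -/
lemma last_mul_sum_le_sum_mul (n : ℕ) (u a : Fin (n + 1) → ℝ) (ha : Antitone a)
    (hu : ∀ i, 0 ≤ ∑ j ∈ Finset.Iic i, u j) :
    a (Fin.last n) * ∑ i, u i ≤ ∑ i, u i * a i := by
  induction n with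
  | zero => simp [mul_comm]
  | succ n ih =>
    have hu' : ∀ i : Fin (n + 1), 0 ≤ ∑ j ∈ Finset.Iic i, u j.castSucc := by
      intro i
      rw [← Fin.sum_Iic_castSucc]
      exact hu _
    have h := ih (fun i => u i.castSucc) (fun i => a i.castSucc)
      (fun i j hij => ha (Fin.castSucc_le_castSucc_iff.mpr hij)) hu'
    have h0 : 0 ≤ ∑ i : Fin (n + 1), u i.castSucc := by
      have h1 := hu' (Fin.last n)
      rwa [← Fin.top_eq_last, Finset.Iic_top] at h1
    have h2 : a (Fin.last (n + 1)) ≤ a (Fin.last n).castSucc := ha (Fin.le_last _)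
    rw [Fin.sum_univ_castSucc u, Fin.sum_univ_castSucc (fun i => u i * a i)]
    have h3 := mul_le_mul_of_nonneg_right h2 h0
    nlinarith

lemma sum_mul_nonneg_of_partial_sums (n : ℕ) (u a : Fin (n + 1) → ℝ) (ha : Antitone a)
    (ha0 : ∀ i, 0 ≤ a i) (hu : ∀ i, 0 ≤ ∑ j ∈ Finset.Iic i, u j) :
    0 ≤ ∑ i, u i * a i := by
  refine le_trans (mul_nonneg (ha0 (Fin.last n)) ?_) (last_mul_sum_le_sum_mul n u a ha hu)
  have h1 := hu (Fin.last n)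
  rwa [← Fin.top_eq_last, Finset.Iic_top] at h1

lemma summable_prod_fin (f : ℕ → ℝ) (hf : Summable f) (hf0 : ∀ n, 0 ≤ f n) (n : ℕ) :
    Summable (fun x : Fin n → ℕ => ∏ i, f (x i)) := by
  induction n with
  | zero => exact Summable.of_finite
  | succ n ih =>
    rw [← (Fin.consEquiv (fun _ : Fin (n + 1) => ℕ)).summable_iff]
    have h := hf.mul_of_nonneg ih hf0 (fun x => Finset.prod_nonneg fun i _ => hf0 _)
    refine h.congr fun x => ?_
    simp [Fin.prod_univ_succ, Fin.consEquiv]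

lemma norm_pochZ_le (B : ℕ) (s : ℂ) (hs : ‖s‖ ≤ B + 1) (k : ℤ) (hk : -1 ≤ k) :
    ‖pochZ s k‖ ≤ (((k + 1).toNat + B).choose B : ℝ) := by
  have key : ∀ n : ℕ, ‖∏ j ∈ Finset.range n, (s + j)‖ ≤ ((B + 1).ascFactorial n : ℝ) := by
    intro n
    induction n with
    | zero => simp
    | succ n ih =>
      rw [Finset.prod_range_succ, norm_mul, Nat.ascFactorial_succ, mul_comm]
      push_cast
      have : ‖s + n‖ ≤ (B : ℝ) + 1 + n := by
        refine (norm_add_le _ _).trans ?_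
        simpa using hs
      gcongr
  unfold pochZ
  split_ifs with h
  · obtain ⟨n, rfl⟩ := Int.eq_ofNat_of_zero_le h
    have h1 : ((n : ℤ) + 1).toNat = n + 1 := by omega
    rw [h1, Int.toNat_natCast, norm_div, Complex.norm_natCast, div_le_iff₀ (by positivity)]
    refine (key (n + 1)).trans (le_of_eq ?_)
    rw [Nat.ascFactorial_eq_factorial_mul_choose, Nat.add_comm B, Nat.choose_symm_add]
    push_cast
    ring
  · have h1 : (k + 1).toNat = 0 := by omega
    simp [h1]

lemma norm_eR (a : ℝ) : ‖eR a‖ = 1 := by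
  simp [eR, Complex.norm_exp]

lemma norm_rpowC (b : ℝ) (z : ℂ) : ‖rpowC b z‖ = Real.exp (z.re * Real.log b) := by
  simp [rpowC, Complex.norm_exp]

lemma norm_lerchTerm {r : ℕ} (lam al : Fin r → ℝ) (s : Fin r → ℂ) (n : Fin r → ℕ) :
    ‖lerchTerm lam al s n‖ = Real.exp (-∑ i, (s i).re * Real.log (n i + al i)) := by
  simp [lerchTerm, norm_eR, norm_rpowC, Real.exp_neg, Real.exp_sum]

/-- Compactness makes the strict inequalities defining `U_r(m)` uniform on `K`. -/
lemma exists_uniform_gap (m r : ℕ) (K : Set (Fin r → ℂ)) (hK : IsCompact K)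
    (hKU : K ⊆ Ur r m) :
    ∃ δ : ℝ, 0 < δ ∧ ∀ s ∈ K, ∀ i : Fin r,
      ((i : ℕ) + 1 : ℝ) * (1 + δ) ≤ (∑ j ∈ Finset.Iic i, (s j).re) + m := by
  have h : ∀ i : Fin r, ∃ c : ℝ, ((i : ℕ) + 1 - m : ℝ) < c ∧
      ∀ s ∈ K, c ≤ ∑ j ∈ Finset.Iic i, (s j).re := by
    intro i
    refine hK.exists_forall_le' (f := fun s : Fin r → ℂ => ∑ j ∈ Finset.Iic i, (s j).re) ?_ ?_
    · fun_prop
    · intro s hs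
      have := hKU hs i
      simpa using this
  choose c hc hcK using h
  have hev : ∀ᶠ δ in nhdsWithin (0 : ℝ) (Set.Ioi 0), ∀ i : Fin r,
      ((i : ℕ) + 1 : ℝ) * (1 + δ) < c i + m := by
    rw [Filter.eventually_all]
    intro i
    have ht : Filter.Tendsto (fun δ : ℝ => ((i : ℕ) + 1 : ℝ) * (1 + δ)) (nhds 0)
        (nhds (((i : ℕ) + 1 : ℝ) * (1 + 0))) := Continuous.tendsto (by fun_prop) 0
    refine (ht.mono_left nhdsWithin_le_nhds).eventually_lt_const ?_
    linarith [hc i]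
  obtain ⟨δ, hδ, hδ0⟩ := (hev.and self_mem_nhdsWithin).exists
  refine ⟨δ, hδ0, fun s hs i => ?_⟩
  linarith [hδ i, hcK i s hs]

/-- The bound on a single term, uniform in `s` as soon as the partial sums of `Re s` stay above the
thresholds given by `δ`. -/
lemma norm_lerchTerm_update_le (m r : ℕ) (lam al : Fin (r + 2) → ℝ)
    (hal : ∀ i, al i ∈ Set.Ico (0 : ℝ) 1) (δ : ℝ) (hδ : 0 < δ) (s : Fin (r + 2) → ℂ)
    (hs : ∀ i : Fin (r + 2),
      ((i : ℕ) + 1 : ℝ) * (1 + δ) ≤ (∑ j ∈ Finset.Iic i, (s j).re) + m)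
    (n : DTuple (r + 2)) (k : ℤ) (hk : (m : ℤ) - 1 ≤ k) :
    ‖lerchTerm lam al (Function.update s 0 (s 0 + (k : ℂ) + 1)) n.1‖ ≤
      (∏ i, (n.1 i : ℝ) ^ (-(1 + δ))) * (2 ^ m * (1 / 2) ^ (k + 1).toNat) := by
  obtain ⟨n, hn, hpos⟩ := n
  simp only
  -- `m` of the `k + 1` extra powers of `N_1` offset the `- m` in `U_r(m)`; the other `p` give decay
  obtain ⟨p, hp⟩ : ∃ p : ℕ, k + 1 = (m + p : ℕ) := ⟨(k + 1 - m).toNat, by omega⟩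
  have hn1 : ∀ i, (1 : ℝ) ≤ n i := fun i => by exact_mod_cast hpos i
  have hN1 : ∀ i, (1 : ℝ) ≤ n i + al i := fun i => by linarith [hn1 i, (hal i).1]
  set L : Fin (r + 2) → ℝ := fun i => Real.log (n i + al i) with hL
  have hL0 : ∀ i, 0 ≤ L i := fun i => Real.log_nonneg (hN1 i)
  have hLanti : Antitone L := by
    intro i j hij
    rcases hij.eq_or_lt with rfl | hij
    · exact le_rfl
    · have h1 : (n j : ℝ) + 1 ≤ n i := by exact_mod_cast hn hij
      exact Real.log_le_log (by linarith [hN1 j]) (by linarith [(hal i).1, (hal j).2])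
  have hL2 : Real.log 2 ≤ L 0 := by
    have h1 : (n 1 : ℝ) + 1 ≤ n 0 := by exact_mod_cast hn (Fin.zero_lt_one)
    exact Real.log_le_log (by norm_num) (by linarith [hn1 1, (hal 0).1])
  have hpart : ∀ (c : ℝ) (i : Fin (r + 2)),
      ∑ j ∈ Finset.Iic i, (if j = 0 then c else 0) = c := by
    intro c i
    simp
  have habel := sum_mul_nonneg_of_partial_sums (r + 1)
    (fun i => (s i).re + (if i = 0 then (m : ℝ) else 0) - (1 + δ)) L hLanti hL0 (by
      intro i
      rw [Finset.sum_sub_distrib, Finset.sum_add_distrib, hpart]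
      simp only [Finset.sum_const, Fin.card_Iic, nsmul_eq_mul]
      push_cast
      linarith [hs i])
  have hsum : ∀ c : ℝ, ∑ i, (if i = 0 then c else 0) * L i = c * L 0 := by
    intro c
    simp
  have hkC : (k : ℂ) + 1 = ((m + p : ℝ) : ℂ) := by
    have : ((k + 1 : ℤ) : ℂ) = ((m + p : ℕ) : ℤ) := by rw [hp]
    push_cast at this ⊢
    exact this
  have hup : ∀ i, (Function.update s 0 (s 0 + (k : ℂ) + 1) i).re =
      (s i).re + (if i = 0 then (m : ℝ) else 0) - (1 + δ) + (1 + δ)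
        + (if i = 0 then (p : ℝ) else 0) := by
    intro i
    by_cases hi : i = 0
    · subst hi
      rw [Function.update_self, add_assoc, hkC, Complex.add_re, Complex.ofReal_re]
      simp
      ring
    · simp [hi]
  have hmain : (1 + δ) * ∑ i, L i + p * Real.log 2 ≤
      ∑ i, (Function.update s 0 (s 0 + (k : ℂ) + 1) i).re * L i := by
    simp only [hup, add_mul _ _ (L _)]
    simp only [sub_mul, add_mul] at habel ⊢
    simp only [Finset.sum_add_distrib, Finset.sum_sub_distrib, hsum] at habel ⊢
    rw [← Finset.mul_sum]
    have := mul_le_mul_of_nonneg_left hL2 (Nat.cast_nonneg (α := ℝ) p)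
    simp only [one_mul, ← Finset.mul_sum] at habel ⊢
    linarith
  rw [norm_lerchTerm]
  have hpow : (2 : ℝ) ^ m * (1 / 2) ^ (k + 1).toNat = Real.exp (-(p * Real.log 2)) := by
    rw [hp, Int.toNat_natCast, Real.exp_neg, Real.exp_nat_mul, Real.exp_log (by norm_num), pow_add,
      ← mul_assoc, ← mul_pow]
    norm_num
    exact (one_div_pow 2 p).trans (one_div _)
  rw [hpow]
  calc _ ≤ Real.exp (-((1 + δ) * ∑ i, L i)) * Real.exp (-(p * Real.log 2)) := by
        rw [← Real.exp_add]
        exact Real.exp_le_exp.mpr (by linarith)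
    _ ≤ _ := by
        gcongr
        rw [Finset.mul_sum, ← Finset.sum_neg_distrib, Real.exp_sum]
        refine Finset.prod_le_prod (fun i _ => (Real.exp_pos _).le) fun i _ => ?_
        rw [Real.rpow_def_of_pos (by linarith [hn1 i])]
        refine Real.exp_le_exp.mpr ?_
        have : Real.log (n i) ≤ L i :=
          Real.log_le_log (by linarith [hn1 i]) (by linarith [(hal i).1])
        nlinarith

/-- For `m ≥ 0`, `r ≥ 2` and every compact `K ⊆ U_r(m)`, the family
`(s_1,…,s_r) ↦ (s_1)_k e(λ_1 n_1)⋯e(λ_r n_r) /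
((n_1+α_1)^{s_1+k+1}(n_2+α_2)^{s_2}⋯(n_r+α_r)^{s_r})`,
indexed by tuples `n_1 > ⋯ > n_r > 0` and integers `k ≥ m−1`,
converges normally on `K`. -/
theorem stmt_4 (m r : ℕ) (lam al : Fin (r + 2) → ℝ)
    (hlam : ∀ i, lam i ∈ Set.Ico (0 : ℝ) 1) (hal : ∀ i, al i ∈ Set.Ico (0 : ℝ) 1)
    (K : Set (Fin (r + 2) → ℂ)) (hK : IsCompact K) (hKU : K ⊆ Ur (r + 2) m) :
    Summable (fun x : DTuple (r + 2) × {k : ℤ // (m : ℤ) - 1 ≤ k} =>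
      ⨆ s : K, ‖pochZ (s.1 0) x.2.1 *
        lerchTerm lam al (Function.update s.1 0 (s.1 0 + (x.2.1 : ℂ) + 1)) x.1.1‖) := by
  obtain ⟨δ, hδ, hgap⟩ := exists_uniform_gap m (r + 2) K hK hKU
  obtain ⟨C, hC⟩ := hK.isBounded.exists_norm_le
  obtain ⟨B, hB⟩ := exists_nat_ge C
  have hF : Summable (fun n : DTuple (r + 2) => ∏ i, (n.1 i : ℝ) ^ (-(1 + δ))) :=
    (summable_prod_fin (fun n : ℕ => (n : ℝ) ^ (-(1 + δ)))
      (Real.summable_nat_rpow.mpr (by linarith)) (fun n => by positivity) (r + 2)).comp_injective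
      Subtype.val_injective
  have hG : Summable (fun k : {k : ℤ // (m : ℤ) - 1 ≤ k} =>
      (2 : ℝ) ^ m * ((((k.1 + 1).toNat + B).choose B : ℝ) * (1 / 2) ^ (k.1 + 1).toNat)) := by
    have h := (summable_choose_mul_geometric_of_norm_lt_one (R := ℝ) B
      (r := 1 / 2) (by norm_num)).mul_left ((2 : ℝ) ^ m)
    refine h.comp_injective (i := fun k : {k : ℤ // (m : ℤ) - 1 ≤ k} => (k.1 + 1).toNat) ?_
    rintro ⟨a, ha⟩ ⟨b, hb⟩ hab
    simp only at hab
    exact Subtype.ext (by simp only; omega)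
  refine Summable.of_nonneg_of_le (fun x => Real.iSup_nonneg fun s => norm_nonneg _) ?_
    (hF.mul_of_nonneg hG (fun n => by dsimp only; positivity) (fun k => by dsimp only; positivity))
  rintro ⟨n, k, hk⟩
  refine Real.iSup_le ?_ (by positivity)
  rintro ⟨s, hs⟩
  have h1 := norm_pochZ_le B (s 0)
    (by linarith [norm_le_pi_norm s 0, hC s hs]) k (by omega)
  have h2 := norm_lerchTerm_update_le m r lam al hal δ hδ s (hgap s hs) n k hk
  rw [norm_mul]
  refine (mul_le_mul h1 h2 (norm_nonneg _) (by positivity)).trans (le_of_eq ?_)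
  ring
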